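/- Let α : a → List a → List a be a step function such that for every Boolean predicate p, every x : a and every list xs: if p x = false then (α x xs).filter p = xs.filter p, and if p x = true then (α x xs).filter p = α x (xs.filter p). Then the right fold List.foldr α [] : List a → List a is filter-equivariant. -/

import Mathlib

/-- A function `f : List a → List a` is filter-equivariant if it commutes with
`List.filter p` for every Boolean predicate `p`. -/
def FilterEquivariant {a : Type*} (f : List a → List a) : Prop :=
  ∀ (p : a → Bool) (xs : List a), f (xs.filter p) = (f xs).filter p

theorem foldr_filterEquivariant {a : Type*} (step : a → List a → List a)
    (hfalse : ∀ (p : a → Bool) (x : a) (xs : List a), p x = false →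
      (step x xs).filter p = xs.filter p)
    (htrue : ∀ (p : a → Bool) (x : a) (xs : List a), p x = true →
      (step x xs).filter p = step x (xs.filter p)) :
    FilterEquivariant (fun xs => List.foldr step [] xs) := by
  intro p xs
  induction xs with
  | nil => rfl
  | cons x xs ih =>
    change List.foldr step [] (xs.filter p) = (List.foldr step [] xs).filter p at ih
    change List.foldr step [] ((x :: xs).filter p) =
      (step x (List.foldr step [] xs)).filter p
    cases h : p x with
    | false =>
      rw [hfalse p x _ h, List.filter_cons_of_neg (by simp [h]), ih]
    | true =>
      rw [htrue p x _ h, List.filter_cons_of_pos h, List.foldr_cons, ih]
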